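/- Every Baxter equivalence class of permutations of size n contains exactly one Baxter permutation. -/

import Mathlib

open scoped Classical

/-- Baxter adjacency relations on words over the alphabet of natural numbers. -/
def BaxterAdj (w w' : List ℕ) : Prop :=
  (∃ (a b c d : ℕ) (u v : List ℕ), a ≤ b ∧ b < c ∧ c ≤ d ∧
      w = c :: (u ++ a :: d :: (v ++ [b])) ∧ w' = c :: (u ++ d :: a :: (v ++ [b]))) ∨
  (∃ (a b c d : ℕ) (u v : List ℕ), a < b ∧ b ≤ c ∧ c < d ∧
      w = b :: (u ++ d :: a :: (v ++ [c])) ∧ w' = b :: (u ++ a :: d :: (v ++ [c])))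

/-- One rewriting step: an adjacency applied inside a word (congruence context). -/
def BaxterStep (w w' : List ℕ) : Prop :=
  ∃ (p s u v : List ℕ), BaxterAdj u v ∧ w = p ++ u ++ s ∧ w' = p ++ v ++ s

/-- The Baxter congruence: the equivalence generated by the Baxter steps. -/
def BaxterEquiv : List ℕ → List ℕ → Prop := Relation.EqvGen BaxterStep

/-- Sylvester adjacency: a c u b ≡ c a u b when a ≤ b < c. -/
def SylvAdj (w w' : List ℕ) : Prop :=
  ∃ (a b c : ℕ) (u : List ℕ), a ≤ b ∧ b < c ∧
    w = a :: c :: (u ++ [b]) ∧ w' = c :: a :: (u ++ [b])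

def SylvStep (w w' : List ℕ) : Prop :=
  ∃ (p s u v : List ℕ), SylvAdj u v ∧ w = p ++ u ++ s ∧ w' = p ++ v ++ s

def SylvEquiv : List ℕ → List ℕ → Prop := Relation.EqvGen SylvStep

/-- #-sylvester adjacency: b u a c ≡ b u c a when a < b ≤ c. -/
def SylvHAdj (w w' : List ℕ) : Prop :=
  ∃ (a b c : ℕ) (u : List ℕ), a < b ∧ b ≤ c ∧
    w = b :: (u ++ [a, c]) ∧ w' = b :: (u ++ [c, a])

def SylvHStep (w w' : List ℕ) : Prop :=
  ∃ (p s u v : List ℕ), SylvHAdj u v ∧ w = p ++ u ++ s ∧ w' = p ++ v ++ s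

def SylvHEquiv : List ℕ → List ℕ → Prop := Relation.EqvGen SylvHStep

/-- The standardized word of `u`: position `i` receives the rank of the letter `u i`
(ties broken from left to right), ranks starting at `1`. -/
def std (u : List ℕ) : List ℕ :=
  (List.range u.length).map fun i =>
    ((List.range u.length).filter fun j =>
      decide (u.getD j 0 < u.getD i 0 ∨ (u.getD j 0 = u.getD i 0 ∧ j < i))).length + 1

/-- The maximal letter of a word. -/
def wordMax (u : List ℕ) : ℕ := u.foldr max 0

/-- The Schützenberger transformation: reverse and complement each letter w.r.t. max + 1. -/
def schutz (u : List ℕ) : List ℕ := u.reverse.map fun x => wordMax u + 1 - x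

/-- Labeled binary trees. -/
inductive BT where
  | leaf : BT
  | node : BT → ℕ → BT → BT
deriving DecidableEq

/-- Leaf insertion into a left binary search tree. -/
def leafInsL : BT → ℕ → BT
  | .leaf, a => .node .leaf a .leaf
  | .node l b r, a => if a < b then .node (leafInsL l a) b r else .node l b (leafInsL r a)

/-- Leaf insertion into a right binary search tree. -/
def leafInsR : BT → ℕ → BT
  | .leaf, a => .node .leaf a .leaf
  | .node l b r, a => if a ≤ b then .node (leafInsR l a) b r else .node l b (leafInsR r a)

/-- The lower restricted tree `T_{≤ a}` of a right binary search tree. -/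
def splitLE : BT → ℕ → BT
  | .leaf, _ => .leaf
  | .node l b r, a => if b ≤ a then .node l b (splitLE r a) else splitLE l a

/-- The higher restricted tree `T_{> a}` of a right binary search tree. -/
def splitGT : BT → ℕ → BT
  | .leaf, _ => .leaf
  | .node l b r, a => if b ≤ a then splitGT r a else .node (splitGT l a) b r

/-- Root insertion into a right binary search tree. -/
def rootIns (t : BT) (a : ℕ) : BT := .node (splitLE t a) a (splitGT t a)

/-- The left tree of the P-symbol: leaf insertions from left to right. -/
def insL (u : List ℕ) : BT := u.foldl leafInsL .leaf

/-- The right tree of the P-symbol: root insertions from left to right. -/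
def insR (u : List ℕ) : BT := u.foldl rootIns .leaf

/-- The P-symbol of a word. -/
def Psymb (u : List ℕ) : BT × BT := (insL u, insR u)

/-- Unlabeled binary trees. -/
inductive UBT where
  | leaf : UBT
  | node : UBT → UBT → UBT
deriving DecidableEq

/-- The shape of a labeled binary tree. -/
def shape : BT → UBT
  | .leaf => .leaf
  | .node l _ r => .node (shape l) (shape r)

/-- The shape of the P-symbol of a word. -/
def Pshape (u : List ℕ) : UBT × UBT := (shape (insL u), shape (insR u))

/-- Number of internal nodes. -/
def sizeU : UBT → ℕ
  | .leaf => 0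
  | .node l r => sizeU l + sizeU r + 1

/-- Orientations of the leaves, from left to right: `true` means right-oriented
(the leaf is the right child of its parent); the parameter is the orientation
assigned if the tree is reduced to a leaf. -/
def loU : UBT → Bool → List Bool
  | .leaf, b => [b]
  | .node l r, _ => loU l false ++ loU r true

/-- Leaf orientations of a labeled binary tree. -/
def loB : BT → Bool → List Bool
  | .leaf, b => [b]
  | .node l _ r, _ => loB l false ++ loB r true

/-- The canopy: orientations of the leaves except the first and the last one. -/
def canU (t : UBT) : List Bool := ((loU t false).drop 1).dropLast

/-- A pair of twin binary trees: same number of nodes and complementary canopies. -/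
def IsTwin (J : UBT × UBT) : Prop :=
  sizeU J.1 = sizeU J.2 ∧ (canU J.1).length = (canU J.2).length ∧
    ∀ i < (canU J.1).length, (canU J.1).getD i false ≠ (canU J.2).getD i false

/-- `σ` is (the word of) a permutation of `{1, …, n}`. -/
def IsPerm (n : ℕ) (σ : List ℕ) : Prop := σ.Perm (List.range' 1 n)

/-- Covering-type step of the right permutohedron (weak) order: exchange of two
adjacent letters `a < b`. -/
def PermutoStep (σ ν : List ℕ) : Prop :=
  ∃ (p s : List ℕ) (a b : ℕ), a < b ∧ σ = p ++ a :: b :: s ∧ ν = p ++ b :: a :: s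

/-- The right permutohedron (weak) order. -/
def PermutoLe : List ℕ → List ℕ → Prop := Relation.ReflTransGen PermutoStep

/-- Baxter permutations: avoiding the generalized patterns 2-41-3 and 3-14-2. -/
def IsBaxterPerm (σ : List ℕ) : Prop :=
  ∀ i j k, i < j → j + 1 < k → k < σ.length →
    ¬(σ.getD (j+1) 0 < σ.getD i 0 ∧ σ.getD i 0 < σ.getD k 0 ∧ σ.getD k 0 < σ.getD j 0) ∧
    ¬(σ.getD j 0 < σ.getD k 0 ∧ σ.getD k 0 < σ.getD i 0 ∧ σ.getD i 0 < σ.getD (j+1) 0)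

/-- Symmetric elementary exchange. -/
def BxSw (w w' : List ℕ) : Prop :=
  ∃ (p s : List ℕ) (a d x y : ℕ), x ∈ p ∧ y ∈ s ∧
    ((a < x ∧ x < d ∧ a < y ∧ y < d) ∨ (d < x ∧ x < a ∧ d < y ∧ y < a)) ∧
    w = p ++ a :: d :: s ∧ w' = p ++ d :: a :: s

/-- List form of the Baxter property. -/
def BxL (w : List ℕ) : Prop :=
  ∀ (p s : List ℕ) (a d x y : ℕ), w = p ++ a :: d :: s → x ∈ p → y ∈ s →
    ¬(d < x ∧ x < y ∧ y < a) ∧ ¬(a < y ∧ y < x ∧ x < d)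

theorem bxAux1 (p s : List ℕ) (a d x y : ℕ) (hx : x ∈ p) (hy : y ∈ s)
    (h : a < x ∧ x < d ∧ a < y ∧ y < d) :
    BaxterEquiv (p ++ a :: d :: s) (p ++ d :: a :: s) := by
  obtain ⟨p1, p2, rfl⟩ := List.append_of_mem hx
  obtain ⟨s1, s2, rfl⟩ := List.append_of_mem hy
  by_cases hxy : x ≤ y
  · apply Relation.EqvGen.symm
    apply Relation.EqvGen.rel
    refine ⟨p1, s2, _, _, Or.inr ⟨a, x, y, d, p2, s1, h.1, hxy, h.2.2.2, rfl, rfl⟩, ?_, ?_⟩ <;> simp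
  · apply Relation.EqvGen.rel
    refine ⟨p1, s2, _, _, Or.inl ⟨a, y, x, d, p2, s1, h.2.2.1.le, by omega, h.2.1.le, rfl, rfl⟩, ?_, ?_⟩ <;> simp

theorem BxSw.equiv {w w' : List ℕ} (h : BxSw w w') : BaxterEquiv w w' := by
  obtain ⟨p, s, a, d, x, y, hx, hy, h | h, rfl, rfl⟩ := h
  · exact bxAux1 p s a d x y hx hy h
  · exact Relation.EqvGen.symm _ _ (bxAux1 p s d a x y hx hy h)

theorem BxSw.rtg_equiv {w w' : List ℕ} (h : Relation.ReflTransGen BxSw w w') :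
    BaxterEquiv w w' := by
  induction h with
  | refl => exact Relation.EqvGen.refl _
  | tail _ h2 ih => exact Relation.EqvGen.trans _ _ _ ih h2.equiv

theorem BxSw.perm {w w' : List ℕ} (h : BxSw w w') : w.Perm w' := by
  obtain ⟨p, s, a, d, x, y, hx, hy, h, rfl, rfl⟩ := h
  exact List.Perm.append_left p (List.Perm.swap _ _ _)

theorem BxSw.rtg_perm {w w' : List ℕ} (h : Relation.ReflTransGen BxSw w w') : w.Perm w' := by
  induction h with
  | refl => exact List.Perm.refl _
  | tail _ h2 ih => exact ih.trans h2.perm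

theorem BxSw.reverse {w w' : List ℕ} (h : BxSw w w') : BxSw w.reverse w'.reverse := by
  obtain ⟨p, s, a, d, x, y, hx, hy, h, rfl, rfl⟩ := h
  exact ⟨s.reverse, p.reverse, d, a, y, x, by simpa, by simpa, by omega, by simp, by simp⟩

theorem BxSw.rtg_reverse {w w' : List ℕ} (h : Relation.ReflTransGen BxSw w w') :
    Relation.ReflTransGen BxSw w.reverse w'.reverse := by
  induction h with
  | refl => exact Relation.ReflTransGen.refl
  | tail _ h2 ih => exact ih.tail h2.reverse

theorem BxL.reverse {w : List ℕ} (h : BxL w) : BxL w.reverse := by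
  intro p s a d x y hw hx hy
  have := h s.reverse p.reverse d a y x (by
    have := congrArg List.reverse hw
    simpa using this) (by simpa) (by simpa)
  omega

theorem bxDirect (p t : List ℕ) (N h : ℕ) (hB : BxL (p ++ h :: t))
    (hN : ∀ z ∈ p ++ h :: t, z < N) (hp : ∀ z ∈ p, z < h) : BxL (p ++ N :: h :: t) := by
  intro p' s' a d x y hw hx hy
  rcases List.append_eq_append_iff.1 hw with ⟨r, hr1, hr2⟩ | ⟨r, hr1, hr2⟩
  ·
    rcases r with _ | ⟨z, r⟩
    · simp at hr2 hr1
      obtain ⟨rfl, rfl, rfl⟩ := hr2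
      subst hr1
      have := hp x hx
      have := hN y (by simp [hy])
      omega
    · simp at hr2
      obtain ⟨rfl, hr2⟩ := hr2
      subst hr1
      have key := hB (p ++ r) s' a d
      have ha : a < N := hN a (by simp [hr2])
      have hd : d < N := hN d (by simp [hr2])
      by_cases hxN : x = N
      · omega
      · exact key x y (by simp [hr2]) (by simp at hx ⊢; tauto) hy
  · rcases r with _ | ⟨z, r⟩
    · simp at hr2 hr1
      obtain ⟨rfl, rfl, rfl⟩ := hr2
      subst hr1
      have := hp x hx
      have := hN y (by simp [hy])
      omega
    · simp at hr2
      obtain ⟨rfl, hr2⟩ := hr2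
      subst hr1
      rcases r with _ | ⟨z, r⟩
      · simp at hr2
        obtain ⟨rfl, rfl⟩ := hr2
        have hxN := hN x (by simp [hx])
        have hxh := hp x (by simp [hx])
        simp at hy
        rcases hy with rfl | hy
        · omega
        · have := hB p' t a h x y (by simp) hx hy
          omega
      · simp at hr2
        obtain ⟨rfl, rfl⟩ := hr2
        have ha : a < N := hN a (by simp)
        have hd : d < N := hN d (by simp)
        by_cases hyN : y = N
        · omega
        · exact hB p' (r ++ h :: t) a d x y (by simp) hx (by simp at hy ⊢; tauto)

theorem bxInsA (N : ℕ) (s : List ℕ) : ∀ p : List ℕ, BxL (p ++ s) → (p ++ s).Nodup →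
    (∀ z ∈ p ++ s, z < N) → (∃ m ∈ s, ∀ x ∈ p, x < m) →
    ∃ τ, Relation.ReflTransGen BxSw (p ++ N :: s) τ ∧ BxL τ := by
  induction s with
  | nil => intro p _ _ _ h; simp at h
  | cons h t ih =>
    intro p hB hnd hN ⟨m, hm, hpm⟩
    by_cases hp : ∀ z ∈ p, z < h
    · exact ⟨_, Relation.ReflTransGen.refl, bxDirect p t N h hB hN hp⟩
    · push Not at hp
      obtain ⟨x, hx, hhx⟩ := hp
      have hne : x ≠ h := by
        rintro rfl
        have := (List.nodup_append.1 hnd).2.2 x hx x (by simp)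
        exact this rfl
      have hxm := hpm x hx
      have hmt : m ∈ t := by
        rcases List.mem_cons.1 hm with rfl | h
        · omega
        · exact h
      obtain ⟨τ, h1, h2⟩ := ih (p ++ [h]) (by simpa using hB) (by simpa using hnd)
        (by simpa using hN) ⟨m, hmt, by
          intro z hz
          simp at hz
          rcases hz with hz | rfl
          · exact hpm z hz
          · omega⟩
      refine ⟨τ, Relation.ReflTransGen.head ?_ h1, h2⟩
      have := hN m (by simp [hmt])
      exact ⟨p, t, N, h, x, m, hx, hmt, by omega, rfl, by simp⟩

theorem bxIns (N : ℕ) (p s : List ℕ) (hB : BxL (p ++ s)) (hnd : (p ++ s).Nodup)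
    (hN : ∀ z ∈ p ++ s, z < N) :
    ∃ τ, Relation.ReflTransGen BxSw (p ++ N :: s) τ ∧ BxL τ := by
  by_cases h0 : p ++ s = []
  · simp at h0
    obtain ⟨rfl, rfl⟩ := h0
    refine ⟨_, Relation.ReflTransGen.refl, ?_⟩
    intro p s a d x y hw
    have := congrArg List.length hw
    simp at this
    omega
  · obtain ⟨m, hm, hmax⟩ : ∃ m ∈ p ++ s, ∀ z ∈ p ++ s, z ≤ m := by
      obtain ⟨m, hm, h⟩ := (p ++ s).toFinset.exists_max_image id (by
        obtain ⟨z, hz⟩ := List.exists_mem_of_ne_nil _ h0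
        exact ⟨z, by simpa using hz⟩)
      exact ⟨m, by simpa using hm, fun z hz => h z (by simpa using hz)⟩
    have hdis := (List.nodup_append.1 hnd).2.2
    rcases List.mem_append.1 hm with hm | hm
    · obtain ⟨τ, h1, h2⟩ := bxInsA N p.reverse s.reverse (by simpa using hB.reverse)
        (by
          have := List.nodup_reverse.2 hnd
          simpa using this) (by
          intro z hz
          exact hN z (by simp at hz ⊢; tauto)) ⟨m, by simpa using hm, by
            intro x hx
            have hx : x ∈ s := by simpa using hx
            exact lt_of_le_of_ne (hmax x (by simp [hx])) (hdis m hm x hx).symm⟩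
      exact ⟨τ.reverse, by simpa using BxSw.rtg_reverse h1, h2.reverse⟩
    · exact bxInsA N s p hB hnd hN ⟨m, hm, fun x hx =>
        lt_of_le_of_ne (hmax x (by simp [hx])) (hdis x hx m hm)⟩

theorem bxLift1 (N : ℕ) {u v : List ℕ} (h : BxSw u v) (hN : ∀ z ∈ u, z < N)
    (p s : List ℕ) (hu : u = p ++ s) :
    ∃ p' s', v = p' ++ s' ∧ Relation.ReflTransGen BxSw (p ++ N :: s) (p' ++ N :: s') := by
  obtain ⟨p0, s0, a, d, x, y, hx, hy, h, rfl, rfl⟩ := h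
  have haN := hN a (by simp)
  have hdN := hN d (by simp)
  have caseA : ∀ r, p0 = p ++ r → s = r ++ a :: d :: s0 → 
    ∃ p' s', p0 ++ d :: a :: s0 = p' ++ s' ∧
      Relation.ReflTransGen BxSw (p ++ N :: s) (p' ++ N :: s') := by
    rintro r rfl rfl
    refine ⟨p, r ++ d :: a :: s0, by simp, Relation.ReflTransGen.single ?_⟩
    exact ⟨p ++ N :: r, s0, a, d, x, y, by simp at hx ⊢; tauto, hy, h, by simp, by simp⟩
  rcases List.append_eq_append_iff.1 hu with ⟨r, hr1, hr2⟩ | ⟨r, hr1, hr2⟩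
  · rcases r with _ | ⟨z, r⟩
    · exact caseA [] (by simpa using hr1.symm) (by simpa using hr2.symm)
    · simp at hr2
      obtain ⟨rfl, hr2⟩ := hr2
      rcases r with _ | ⟨z, r⟩
      · simp at hr2
        subst hr2
        subst hr1
        rcases h with h | h
        · refine ⟨p0, d :: a :: s0, by simp, ?_⟩
          refine Relation.ReflTransGen.head (b := p0 ++ N :: a :: d :: s0) ?_
            (Relation.ReflTransGen.single ?_)
          · exact ⟨p0, d :: s0, a, N, x, y, hx, by simp [hy], by omega, by simp, by simp⟩
          · exact ⟨p0 ++ [N], s0, a, d, x, y, by simp [hx], hy, by omega, by simp, by simp⟩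
        · refine ⟨p0 ++ [d, a], s0, by simp, ?_⟩
          refine Relation.ReflTransGen.head (b := p0 ++ a :: d :: N :: s0) ?_
            (Relation.ReflTransGen.single ?_)
          · exact ⟨p0 ++ [a], s0, N, d, x, y, by simp [hx], hy, by omega, by simp, by simp⟩
          · exact ⟨p0, N :: s0, a, d, x, y, hx, by simp [hy], by omega, by simp, by simp⟩
      · simp at hr2
        obtain ⟨rfl, rfl⟩ := hr2
        subst hr1
        refine ⟨p0 ++ d :: a :: r, s, by simp, Relation.ReflTransGen.single ?_⟩
        exact ⟨p0, r ++ N :: s, a, d, x, y, hx, by simp at hy ⊢; tauto, h, by simp, by simp⟩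
  · exact caseA r hr1 hr2

theorem bxLift (N : ℕ) {u v : List ℕ} (h : Relation.ReflTransGen BxSw u v) (hN : ∀ z ∈ u, z < N)
    (p s : List ℕ) (hu : u = p ++ s) :
    ∃ p' s', v = p' ++ s' ∧ Relation.ReflTransGen BxSw (p ++ N :: s) (p' ++ N :: s') := by
  induction h with
  | refl => exact ⟨p, s, hu, Relation.ReflTransGen.refl⟩
  | tail h1 h2 ih =>
    obtain ⟨p1, s1, e1, g1⟩ := ih
    obtain ⟨p2, s2, e2, g2⟩ := bxLift1 N h2
      (fun z hz => hN z ((BxSw.rtg_perm h1).mem_iff.2 hz)) p1 s1 e1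
    exact ⟨p2, s2, e2, g1.trans g2⟩

theorem bxExists (n : ℕ) : ∀ w : List ℕ, w.length = n → w.Nodup →
    ∃ τ, Relation.ReflTransGen BxSw w τ ∧ BxL τ := by
  induction n with
  | zero =>
    intro w hw _
    have : w = [] := by simpa using hw
    subst this
    refine ⟨[], Relation.ReflTransGen.refl, ?_⟩
    intro p s a d x y hw
    simp at hw
  | succ n ih =>
    intro w hw hnd
    obtain ⟨N, hN, hmax⟩ : ∃ m ∈ w, ∀ z ∈ w, z ≤ m := by
      obtain ⟨m, hm, h⟩ := w.toFinset.exists_max_image id (by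
        obtain ⟨z, hz⟩ := List.exists_mem_of_length_pos (l := w) (by omega)
        exact ⟨z, by simpa using hz⟩)
      exact ⟨m, by simpa using hm, fun z hz => h z (by simpa using hz)⟩
    obtain ⟨p, s, rfl⟩ := List.append_of_mem hN
    have hnd2 : N ∉ p ++ s ∧ (p ++ s).Nodup := by
      have := (List.perm_middle (a := N) (l₁ := p) (l₂ := s)).nodup_iff.1 hnd
      exact List.nodup_cons.1 this
    have hlt : ∀ z ∈ p ++ s, z < N := by
      intro z hz
      refine lt_of_le_of_ne (hmax z (by simp at hz ⊢; tauto)) ?_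
      rintro rfl
      exact hnd2.1 hz
    obtain ⟨τ, h1, h2⟩ := ih (p ++ s) (by simp at hw ⊢; omega) hnd2.2
    obtain ⟨p', s', rfl, h3⟩ := bxLift N h1 hlt p s rfl
    have hperm := BxSw.rtg_perm h1
    obtain ⟨τ, h4, h5⟩ := bxIns N p' s' h2 (hperm.nodup_iff.1 hnd2.2)
      (fun z hz => hlt z (hperm.mem_iff.2 hz))
    exact ⟨τ, h3.trans h4, h5⟩

theorem BxL.isBaxter {w : List ℕ} (h : BxL w) : IsBaxterPerm w := by
  intro i j k hij hjk hk
  have hj1 : j + 1 < w.length := by omega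
  have hw : w = w.take j ++ w[j] :: w[j+1] :: w.drop (j+2) := by
    rw [← List.drop_eq_getElem_cons, ← List.drop_eq_getElem_cons, List.take_append_drop]
  have hi : w[i] ∈ w.take j := List.mem_take_iff_getElem.2 ⟨i, by omega, rfl⟩
  have hk' : w[k] ∈ w.drop (j+2) := List.mem_drop_iff_getElem.2 ⟨k - (j+2), by omega, by
    congr 1; omega⟩
  have := h _ _ _ _ _ _ hw hi hk'
  simpa [List.getD_eq_getElem, hk, hj1, show i < w.length by omega, show j < w.length by omega]
    using this

/-! Invariants -/

def BxInv (w w' : List ℕ) : Prop :=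
  w.Perm w' ∧ ∀ lo hi : ℕ,
    (w.filter (fun z => decide (lo ≤ z ∧ z ≤ hi))).head? =
      (w'.filter (fun z => decide (lo ≤ z ∧ z ≤ hi))).head? ∧
    (w.filter (fun z => decide (lo ≤ z ∧ z ≤ hi))).getLast? =
      (w'.filter (fun z => decide (lo ≤ z ∧ z ≤ hi))).getLast?

theorem bxInvAux (p s : List ℕ) (a d x y : ℕ) (hx : x ∈ p) (hy : y ∈ s)
    (h : a ≤ x ∧ x ≤ d ∧ a ≤ y ∧ y ≤ d) :
    BxInv (p ++ a :: d :: s) (p ++ d :: a :: s) := by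
  refine ⟨List.Perm.append_left p (List.Perm.swap _ _ _), fun lo hi => ?_⟩
  by_cases h1 : (lo ≤ a ∧ a ≤ hi) ∧ (lo ≤ d ∧ d ≤ hi)
  · have hx' : x ∈ p.filter (fun z => decide (lo ≤ z ∧ z ≤ hi)) := by
      simp [hx]; omega
    have hy' : y ∈ s.filter (fun z => decide (lo ≤ z ∧ z ≤ hi)) := by
      simp [hy]; omega
    obtain ⟨p1, p2, hp⟩ := List.append_of_mem hx'
    obtain ⟨s1, s2, hs⟩ := List.append_of_mem hy'
    rw [List.filter_append, List.filter_append, hp]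
    simp only [List.filter_cons, hs]
    simp [h1, List.getLast?_append, List.getLast?_cons]
  · have : (a :: d :: s).filter (fun z => decide (lo ≤ z ∧ z ≤ hi)) =
        (d :: a :: s).filter (fun z => decide (lo ≤ z ∧ z ≤ hi)) := by
      simp only [List.filter_cons, decide_eq_true_eq]
      split_ifs <;> first | rfl | (exfalso; tauto)
    rw [List.filter_append, List.filter_append, this]
    exact ⟨rfl, rfl⟩

theorem BxInv.symm {w w' : List ℕ} (h : BxInv w w') : BxInv w' w :=
  ⟨h.1.symm, fun lo hi => ⟨(h.2 lo hi).1.symm, (h.2 lo hi).2.symm⟩⟩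

theorem BxInv.trans {w w' w'' : List ℕ} (h : BxInv w w') (h' : BxInv w' w'') : BxInv w w'' :=
  ⟨h.1.trans h'.1, fun lo hi => ⟨(h.2 lo hi).1.trans (h'.2 lo hi).1,
    (h.2 lo hi).2.trans (h'.2 lo hi).2⟩⟩

theorem bxInvOfEquiv {w w' : List ℕ} (h : BaxterEquiv w w') : BxInv w w' := by
  unfold BaxterEquiv at h
  induction h with
  | rel x y h =>
    obtain ⟨p, s, u, v, h | h, rfl, rfl⟩ := h
    · obtain ⟨a, b, c, d, u, v, h1, h2, h3, rfl, rfl⟩ := h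
      have := bxInvAux (p ++ c :: u) (v ++ b :: s) a d c b (by simp) (by simp) (by omega)
      simpa using this
    · obtain ⟨a, b, c, d, u, v, h1, h2, h3, rfl, rfl⟩ := h
      have := (bxInvAux (p ++ b :: u) (v ++ c :: s) a d b c (by simp) (by simp) (by omega)).symm
      simpa using this
  | refl x => exact ⟨List.Perm.refl _, fun _ _ => ⟨rfl, rfl⟩⟩
  | symm _ _ _ ih => exact ih.symm
  | trans _ _ _ _ _ ih1 ih2 => exact ih1.trans ih2

theorem bxHead {w : List ℕ} (lo hi a : ℕ) (ha : a ∈ w) (h1 : lo ≤ a ∧ a ≤ hi)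
    (h : ∀ z ∈ w, lo ≤ z → z ≤ hi → w.idxOf a ≤ w.idxOf z) :
    (w.filter (fun z => decide (lo ≤ z ∧ z ≤ hi))).head? = some a := by
  obtain ⟨p, s, rfl, hap⟩ := List.eq_append_cons_of_mem ha
  have : p.filter (fun z => decide (lo ≤ z ∧ z ≤ hi)) = [] := by
    rw [List.filter_eq_nil_iff]
    intro z hz hz2
    simp at hz2
    have := h z (by simp [hz]) hz2.1 hz2.2
    rw [List.idxOf_append_of_notMem hap, List.idxOf_append_of_mem hz] at this
    have := List.idxOf_lt_length_of_mem hz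
    omega
  rw [List.filter_append, this]
  simp [h1]

theorem bxLast {w : List ℕ} (hnd : w.Nodup) (lo hi a : ℕ) (ha : a ∈ w) (h1 : lo ≤ a ∧ a ≤ hi)
    (h : ∀ z ∈ w, lo ≤ z → z ≤ hi → w.idxOf z ≤ w.idxOf a) :
    (w.filter (fun z => decide (lo ≤ z ∧ z ≤ hi))).getLast? = some a := by
  obtain ⟨p, s, rfl, hap⟩ := List.eq_append_cons_of_mem ha
  have hdis := List.nodup_append.1 hnd
  have : s.filter (fun z => decide (lo ≤ z ∧ z ≤ hi)) = [] := by
    rw [List.filter_eq_nil_iff]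
    intro z hz hz2
    simp at hz2
    have := h z (by simp [hz]) hz2.1 hz2.2
    have hzp : z ∉ p := fun hzp => hdis.2.2 z hzp z (by simp [hz]) rfl
    have hza : a ≠ z := by
      rintro rfl
      exact (List.nodup_cons.1 hdis.2.1).1 hz
    rw [List.idxOf_append_of_notMem hap, List.idxOf_append_of_notMem hzp,
      List.idxOf_cons_ne _ hza] at this
    simp at this
  rw [List.filter_append, List.filter_cons, this]
  simp [h1]

theorem bxJump (f : ℕ → Prop) (i k : ℕ) (hik : i < k) (hi : f i) (hk : ¬ f k) :
    ∃ j, i ≤ j ∧ j < k ∧ f j ∧ ¬ f (j + 1) := by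
  by_contra hcon
  push Not at hcon
  have : ∀ m, i + m ≤ k → f (i + m) := by
    intro m
    induction m with
    | zero => intro _; exact hi
    | succ m ih =>
      intro hm
      exact hcon (i + m) (by omega) (by omega) (ih (by omega))
  apply hk
  have := this (k - i) (by omega)
  rwa [show i + (k - i) = k by omega] at this

theorem bxGetD {w : List ℕ} {a : ℕ} (ha : a ∈ w) : w.getD (w.idxOf a) 0 = a := by
  have := List.idxOf_lt_length_of_mem ha
  rw [List.getD_eq_getElem _ _ this]
  exact List.getElem_idxOf this

theorem bxIdx {w : List ℕ} (hnd : w.Nodup) {j : ℕ} (hj : j < w.length) :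
    w.getD j 0 ∈ w ∧ w.idxOf (w.getD j 0) = j := by
  rw [List.getD_eq_getElem _ _ hj]
  exact ⟨List.getElem_mem hj, hnd.idxOf_getElem j hj⟩

theorem bxNoBoth {σ τ : List ℕ} (hs : σ.Nodup) (ht : τ.Nodup) (hinv : BxInv σ τ)
    (bs : IsBaxterPerm σ) (bt : IsBaxterPerm τ) (a d : ℕ) (had : a < d) (ha : a ∈ σ) (hd : d ∈ σ)
    (h1 : σ.idxOf a < σ.idxOf d) (h2 : τ.idxOf d < τ.idxOf a)
    (hb : ∀ x ∈ σ, a < x → x < d → (σ.idxOf x < σ.idxOf a ↔ τ.idxOf x < τ.idxOf a) ∧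
      (σ.idxOf x < σ.idxOf d ↔ τ.idxOf x < τ.idxOf d)) : False := by
  have hm : ∀ {z}, z ∈ σ ↔ z ∈ τ := hinv.1.mem_iff
  have inj : ∀ {x y}, x ∈ σ → y ∈ σ → x ≠ y → σ.idxOf x ≠ σ.idxOf y := by
    intro x y hx hy hxy h
    exact hxy ((List.idxOf_inj hx).1 h)
  have injt : ∀ {x y}, x ∈ σ → y ∈ σ → x ≠ y → τ.idxOf x ≠ τ.idxOf y := by
    intro x y hx hy hxy h
    exact hxy ((List.idxOf_inj (hm.1 hx)).1 h)
  have hc : ∀ x ∈ σ, a < x → x < d →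
      (σ.idxOf x < σ.idxOf a ∧ τ.idxOf x < τ.idxOf d) ∨
      (σ.idxOf d < σ.idxOf x ∧ τ.idxOf a < τ.idxOf x) := by
    intro x hx hax hxd
    have := hb x hx hax hxd
    have := inj hx ha (by omega)
    have := inj hx hd (by omega)
    have := injt hx ha (by omega)
    have := injt hx hd (by omega)
    omega
  have hP : ∃ x ∈ σ, a < x ∧ x < d ∧ σ.idxOf x < σ.idxOf a ∧ τ.idxOf x < τ.idxOf d := by
    by_contra hcon
    push Not at hcon
    have e1 := bxHead (w := σ) a d a ha (by omega) (by
      intro z hz hz1 hz2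
      by_cases hza : z = a
      · rw [hza]
      by_cases hzd : z = d
      · rw [hzd]; omega
      have := hc z hz (by omega) (by omega)
      have := hcon z hz (by omega) (by omega)
      omega)
    have e2 := bxHead (w := τ) a d d (hm.1 hd) (by omega) (by
      intro z hz hz1 hz2
      by_cases hza : z = a
      · rw [hza]; omega
      by_cases hzd : z = d
      · rw [hzd]
      have := hc z (hm.2 hz) (by omega) (by omega)
      have := hcon z (hm.2 hz) (by omega) (by omega)
      omega)
    have := (hinv.2 a d).1
    rw [e1, e2] at this
    simp at this
    omega
  have hS : ∃ x ∈ σ, a < x ∧ x < d ∧ σ.idxOf d < σ.idxOf x ∧ τ.idxOf a < τ.idxOf x := by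
    by_contra hcon
    push Not at hcon
    have e1 := bxLast hs a d d hd (by omega) (by
      intro z hz hz1 hz2
      by_cases hza : z = a
      · rw [hza]; omega
      by_cases hzd : z = d
      · rw [hzd]
      have := hc z hz (by omega) (by omega)
      have := hcon z hz (by omega) (by omega)
      omega)
    have e2 := bxLast ht a d a (hm.1 ha) (by omega) (by
      intro z hz hz1 hz2
      by_cases hza : z = a
      · rw [hza]
      by_cases hzd : z = d
      · rw [hzd]; omega
      have := hc z (hm.2 hz) (by omega) (by omega)
      have := hcon z (hm.2 hz) (by omega) (by omega)
      omega)
    have := (hinv.2 a d).2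
    rw [e1, e2] at this
    simp at this
    omega
  obtain ⟨x, hx, hx1, hx2, hx3, hx4⟩ := hP
  obtain ⟨y, hy, hy1, hy2, hy3, hy4⟩ := hS
  have hxy : x ≠ y := by
    rintro rfl
    omega
  have lenS := List.idxOf_lt_length_of_mem hy
  have lenT := List.idxOf_lt_length_of_mem (hm.1 hy)
  have A : ¬ y < x := by
    intro hlt
    obtain ⟨j, j1, j2, j3, j4⟩ := bxJump (fun j => σ.getD j 0 ≤ a) _ _ h1
      (by simp only [bxGetD ha]; omega) (by simp only [bxGetD hd]; omega)
    simp only [not_le] at j3 j4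
    obtain ⟨m1, m2⟩ := bxIdx hs (j := j + 1) (by omega)
    have j5 : d ≤ σ.getD (j + 1) 0 := by
      by_contra hcon
      have := hc _ m1 j4 (by omega)
      omega
    have := (bs (σ.idxOf x) j (σ.idxOf y) (by omega) (by omega) lenS).2
    rw [bxGetD hx, bxGetD hy] at this
    omega
  have B : ¬ x < y := by
    intro hlt
    obtain ⟨j, j1, j2, j3, j4⟩ := bxJump (fun j => d ≤ τ.getD j 0) _ _ h2
      (by simp only [bxGetD (hm.1 hd)]; omega) (by simp only [bxGetD (hm.1 ha)]; omega)
    simp only [not_le] at j3 j4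
    obtain ⟨m1, m2⟩ := bxIdx ht (j := j + 1) (by omega)
    have j5 : τ.getD (j + 1) 0 ≤ a := by
      by_contra hcon
      have := hc _ (hm.2 m1) (by omega) j4
      omega
    have := (bt (τ.idxOf x) j (τ.idxOf y) (by omega) (by omega) lenT).1
    rw [bxGetD (hm.1 hx), bxGetD (hm.1 hy)] at this
    omega
  omega

theorem bxOrder {σ τ : List ℕ} (hs : σ.Nodup) (ht : τ.Nodup) (hinv : BxInv σ τ)
    (bs : IsBaxterPerm σ) (bt : IsBaxterPerm τ) (n : ℕ) :
    ∀ a d, a < d → d - a = n → a ∈ σ → d ∈ σ → (σ.idxOf a < σ.idxOf d ↔ τ.idxOf a < τ.idxOf d) := by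
  induction n using Nat.strong_induction_on with
  | _ n ih =>
    intro a d had hn ha hd
    have hm : ∀ {z}, z ∈ σ ↔ z ∈ τ := hinv.1.mem_iff
    have inj : ∀ {x y}, x ∈ σ → y ∈ σ → x ≠ y → σ.idxOf x ≠ σ.idxOf y := by
      intro x y hx hy hxy h
      exact hxy ((List.idxOf_inj hx).1 h)
    have injt : ∀ {x y}, x ∈ σ → y ∈ σ → x ≠ y → τ.idxOf x ≠ τ.idxOf y := by
      intro x y hx hy hxy h
      exact hxy ((List.idxOf_inj (hm.1 hx)).1 h)
    have hb : ∀ x ∈ σ, a < x → x < d → (σ.idxOf x < σ.idxOf a ↔ τ.idxOf x < τ.idxOf a) ∧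
      (σ.idxOf x < σ.idxOf d ↔ τ.idxOf x < τ.idxOf d) := by
      intro x hx h1 h2
      have e1 := ih (x - a) (by omega) a x h1 rfl ha hx
      have e2 := ih (d - x) (by omega) x d h2 rfl hx hd
      have := inj hx ha (by omega)
      have := injt hx ha (by omega)
      omega
    have g1 := inj ha hd (by omega)
    have g2 := injt ha hd (by omega)
    constructor
    · intro h
      by_contra hcon
      exact bxNoBoth hs ht hinv bs bt a d had ha hd h (by omega) hb
    · intro h
      by_contra hcon
      refine bxNoBoth ht hs hinv.symm bt bs a d had (hm.1 ha) (hm.1 hd) h (by omega) ?_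
      intro x hx k1 k2
      have := hb x (hm.2 hx) k1 k2
      omega

theorem bxPairwise {w : List ℕ} (hnd : w.Nodup) :
    w.Pairwise (fun a b => w.idxOf a < w.idxOf b) := by
  rw [List.pairwise_iff_getElem]
  intro i j hi hj hij
  rw [hnd.idxOf_getElem i hi, hnd.idxOf_getElem j hj]
  exact hij

theorem bxUnique {σ τ : List ℕ} (hs : σ.Nodup) (ht : τ.Nodup) (hinv : BxInv σ τ)
    (bs : IsBaxterPerm σ) (bt : IsBaxterPerm τ) : σ = τ := by
  have hm : ∀ {z}, z ∈ σ ↔ z ∈ τ := hinv.1.mem_iff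
  have P1 := bxPairwise hs
  have P2 : τ.Pairwise (fun a b => σ.idxOf a < σ.idxOf b) := by
    refine (bxPairwise ht).imp_of_mem ?_
    intro a b ha hb hab
    have ha' := hm.2 ha
    have hb' := hm.2 hb
    rcases lt_trichotomy a b with h | h | h
    · exact (bxOrder hs ht hinv bs bt _ a b h rfl ha' hb').2 hab
    · subst h; omega
    · have := bxOrder hs ht hinv bs bt _ b a h rfl hb' ha'
      have : σ.idxOf a ≠ σ.idxOf b := fun e => by
        have := (List.idxOf_inj ha').1 e
        omega
      omega
  refine List.Perm.eq_of_pairwise ?_ P1 P2 hinv.1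
  intro a b _ _ h1 h2
  omega

/-- every Baxter equivalence class of permutations of size `n`
contains exactly one Baxter permutation. -/
theorem baxter_class_unique_baxter_permutation (n : ℕ) (σ : List ℕ)
    (hσ : IsPerm n σ) :
    ∃! τ : List ℕ, IsPerm n τ ∧ BaxterEquiv σ τ ∧ IsBaxterPerm τ := by
  have hnd : σ.Nodup := hσ.nodup_iff.2 List.nodup_range'
  obtain ⟨τ, h1, h2⟩ := bxExists _ σ rfl hnd
  refine ⟨τ, ⟨(BxSw.rtg_perm h1).symm.trans hσ, BxSw.rtg_equiv h1, h2.isBaxter⟩, ?_⟩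
  rintro ρ ⟨r1, r2, r3⟩
  have hinv := (bxInvOfEquiv r2).symm.trans (bxInvOfEquiv (BxSw.rtg_equiv h1))
  exact bxUnique (r1.nodup_iff.2 List.nodup_range')
    ((BxSw.rtg_perm h1).nodup_iff.1 hnd) hinv r3 h2.isBaxter
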